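/- Let φ: ℝ → ℝ be bounded and measurable, let t > 0, and let X be a Gaussian random variable with mean 0 and variance t. Then E[φ(X)²] = ∑_{n≥0} (tⁿ/n!) ((P_t φ)^{(n)}(0))², where (P_t φ)^{(n)} denotes the n-th derivative of the heat evolution P_t φ. -/

import Mathlib

open MeasureTheory ProbabilityTheory Real

/-- The one-dimensional heat semigroup applied to a function `φ`. -/
noncomputable def heatP (t : ℝ) (φ : ℝ → ℝ) (x : ℝ) : ℝ :=
  ∫ y : ℝ, φ y * ((2 * Real.pi * t) ^ (-(1/2 : ℝ)) * Real.exp (-(x - y) ^ 2 / (2 * t)))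

/-! The Cameron–Martin densities `E_x = dN(m + x, t) / dN(m, t)` have the Gram kernel
`⟪E_x, E_z⟫ = exp (x z / t) = ∑ (x z) ^ n / (t ^ n n!)` in `L²(N(m, t))` and span a dense subspace,
so `E_x ↦ (x ^ n / √(t ^ n n!))ₙ` extends to an isometry into `ℓ²`. Since
`P_t φ (m + x) = ⟪φ, E_x⟫`, the image `c` of `φ` is read off from the Taylor series of `P_t φ` at
`m`, and `‖φ‖ = ‖c‖` is the claim. -/

theorem iteratedDeriv_eq_factorial_smul_coeff {𝕜 E : Type*} [NontriviallyNormedField 𝕜]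
    [NormedAddCommGroup E] [NormedSpace 𝕜 E] [CompleteSpace E] {F : 𝕜 → E}
    {p : FormalMultilinearSeries 𝕜 𝕜 E} {x : 𝕜} (h : HasFPowerSeriesAt F p x) (n : ℕ) :
    iteratedDeriv n F x = n.factorial • p.coeff n := by
  obtain ⟨r, hr⟩ := h
  rw [iteratedDeriv_eq_iteratedFDeriv, ← hr.factorial_smul]
  rfl

section Hilbert

variable {ι 𝕜 H : Type*} [RCLike 𝕜] [NormedAddCommGroup H] [InnerProductSpace 𝕜 H]

theorem exists_linearIsometry_of_inner_eq {K : Type*} [NormedAddCommGroup K]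
    [InnerProductSpace 𝕜 K] [CompleteSpace K] {u : ι → H} {v : ι → K}
    (hu : Dense (Submodule.span 𝕜 (Set.range u) : Set H))
    (h : ∀ i j, inner 𝕜 (u i) (u j) = inner 𝕜 (v i) (v j)) :
    ∃ T : H →ₗᵢ[𝕜] K, ∀ i, T (u i) = v i := by
  let U := Finsupp.linearCombination 𝕜 u
  let V := Finsupp.linearCombination 𝕜 v
  have hdense : DenseRange U := by
    rwa [DenseRange, ← LinearMap.coe_range, Finsupp.range_linearCombination]
  have hnorm (a : ι →₀ 𝕜) : ‖V a‖ = ‖U a‖ := by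
    have hinner : inner 𝕜 (V a) (V a) = inner 𝕜 (U a) (U a) := by
      simp only [U, V, Finsupp.linearCombination_apply, Finsupp.sum, sum_inner, inner_sum,
        inner_smul_left, inner_smul_right, h]
    rw [norm_eq_sqrt_re_inner (𝕜 := 𝕜), norm_eq_sqrt_re_inner (𝕜 := 𝕜), hinner]
  have hbound : ∃ C, ∀ a, ‖V a‖ ≤ C * ‖U a‖ := ⟨1, fun a => by rw [hnorm, one_mul]⟩
  have hext (a : ι →₀ 𝕜) : V.extendOfNorm U (U a) = V a := LinearMap.extendOfNorm_eq hdense hbound a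
  refine ⟨⟨(V.extendOfNorm U).toLinearMap, fun f => ?_⟩, fun i => ?_⟩
  · refine hdense.induction (P := fun f => ‖V.extendOfNorm U f‖ = ‖f‖) ?_
      (isClosed_eq (by fun_prop) continuous_norm) f
    rintro _ ⟨a, rfl⟩
    rw [hext, hnorm]
  · simpa [U, V] using hext (Finsupp.single i 1)

theorem exists_lp_norm_eq_and_hasSum_inner {κ : Type*} {G : κ → Type*}
    [∀ k, NormedAddCommGroup (G k)] [∀ k, InnerProductSpace 𝕜 (G k)] [∀ k, CompleteSpace (G k)]
    {u : ι → H} {e : ι → ∀ k, G k} (hu : Dense (Submodule.span 𝕜 (Set.range u) : Set H))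
    (he : ∀ i j, HasSum (fun k => inner 𝕜 (e i k) (e j k)) (inner 𝕜 (u i) (u j))) (f : H) :
    ∃ c : lp G 2, ‖c‖ = ‖f‖ ∧ ∀ i, HasSum (fun k => inner 𝕜 (c k) (e i k)) (inner 𝕜 f (u i)) := by
  have hmem (i : ι) : Memℓp (e i) 2 := by
    refine memℓp_gen ?_
    simpa only [Function.comp_def, RCLike.reCLM_apply, inner_self_eq_norm_sq, ENNReal.toReal_ofNat,
      Real.rpow_two] using (RCLike.hasSum_re 𝕜 (he i i)).summable
  let v (i : ι) : lp G 2 := ⟨e i, hmem i⟩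
  obtain ⟨T, hT⟩ := exists_linearIsometry_of_inner_eq (v := v) hu fun i j =>
    (he i j).unique (lp.hasSum_inner (v i) (v j))
  refine ⟨T f, T.norm_map f, fun i => ?_⟩
  rw [← T.inner_map_map, hT]
  exact lp.hasSum_inner (T f) (v i)

theorem hasSum_norm_sq_iteratedDeriv_inner {u : 𝕜 → H} {a : ℕ → ℝ} (ha : ∀ n, 0 < a n)
    (hu : Dense (Submodule.span 𝕜 (Set.range u) : Set H))
    (hgram : ∀ x z, HasSum (fun n => (a n : 𝕜) * inner 𝕜 x z ^ n) (inner 𝕜 (u x) (u z))) (f : H) :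
    HasSum (fun n => ‖iteratedDeriv n (fun x => inner 𝕜 f (u x)) 0‖ ^ 2
      / (a n * (n.factorial : ℝ) ^ 2)) (‖f‖ ^ 2) := by
  obtain ⟨c, hcnorm, hc⟩ := exists_lp_norm_eq_and_hasSum_inner (G := fun _ : ℕ => 𝕜)
    (e := fun x n => (√(a n) : 𝕜) * x ^ n) hu (fun x z => (hgram x z).congr_fun fun n => by
      have hsqrt : (√(a n) : 𝕜) * √(a n) = a n := by
        rw [← RCLike.ofReal_mul, Real.mul_self_sqrt (ha n).le]
      simp only [RCLike.inner_apply, map_mul, map_pow, RCLike.conj_ofReal, ← hsqrt]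
      ring) f
  have hseries : HasFPowerSeriesAt (fun x => inner 𝕜 f (u x))
      (.ofScalars 𝕜 fun n => (√(a n) : 𝕜) * (starRingEnd 𝕜) (c n)) 0 :=
    hasFPowerSeriesAt_iff.2 <| .of_forall fun x => by
      rw [zero_add]
      refine (hc x).congr_fun fun n => ?_
      simp only [FormalMultilinearSeries.coeff_ofScalars, smul_eq_mul, RCLike.inner_apply]
      ring
  have hnorm : HasSum (fun n => ‖c n‖ ^ 2) (‖f‖ ^ 2) := by
    simpa [← hcnorm] using lp.hasSum_norm (p := 2) (by simp) c
  refine hnorm.congr_fun fun n => ?_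
  rw [iteratedDeriv_eq_factorial_smul_coeff hseries, FormalMultilinearSeries.coeff_ofScalars,
    nsmul_eq_mul, norm_mul, norm_mul, RCLike.norm_conj, RCLike.norm_natCast, RCLike.norm_ofReal,
    mul_pow, mul_pow, sq_abs, Real.sq_sqrt (ha n).le]
  have := ha n
  field_simp

end Hilbert

section ExponentialUniqueness

theorem map_eq_map_of_mgf_eq {Ω Ω' : Type*} {_ : MeasurableSpace Ω} {_ : MeasurableSpace Ω'}
    {μ : Measure Ω} {ν : Measure Ω'} [IsFiniteMeasure μ] [IsFiniteMeasure ν] {X : Ω → ℝ}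
    {Y : Ω' → ℝ} (h0 : 0 ∈ interior (integrableExpSet X μ)) (h : mgf X μ = mgf Y ν) :
    μ.map X = ν.map Y := by
  have hmass : μ.real Set.univ = ν.real Set.univ := by simpa only [mgf_zero'] using congrFun h 0
  have hzero : μ = 0 ↔ ν = 0 := by
    rw [← Measure.measure_univ_eq_zero, ← Measure.measure_univ_eq_zero (μ := ν),
      ← measureReal_eq_zero_iff, hmass, measureReal_eq_zero_iff]
  have hX := aemeasurable_of_mem_interior_integrableExpSet h0
  have hY := aemeasurable_of_mem_interior_integrableExpSet
    (integrableExpSet_eq_of_mgf' h hzero ▸ h0)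
  refine Measure.ext_of_charFun (funext fun s => ?_)
  rw [← complexMGF_mul_I hX, ← complexMGF_mul_I hY]
  exact eqOn_complexMGF_of_mgf' h hzero (by simpa using h0)

section WithDensity

variable {α : Type*} [MeasurableSpace α] {μ : Measure α} {f g : α → ℝ}

theorem integrable_withDensity_ofReal_iff (hf : AEMeasurable f μ) :
    Integrable g (μ.withDensity fun y => ENNReal.ofReal (f y)) ↔
      Integrable (fun y => max (f y) 0 * g y) μ := by
  rw [integrable_withDensity_iff_integrable_smul₀' hf.ennreal_ofReal (.of_forall fun y => by simp)]
  simp only [ENNReal.toReal_ofReal', smul_eq_mul]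

theorem integral_withDensity_ofReal (hf : AEMeasurable f μ) :
    ∫ y, g y ∂(μ.withDensity fun y => ENNReal.ofReal (f y)) = ∫ y, max (f y) 0 * g y ∂μ := by
  rw [integral_withDensity_eq_integral_toReal_smul₀ hf.ennreal_ofReal (.of_forall fun y => by simp)]
  simp only [ENNReal.toReal_ofReal', smul_eq_mul]

end WithDensity

theorem ae_eq_zero_of_integral_mul_exp_eq_zero {μ : Measure ℝ} {f : ℝ → ℝ}
    (hint : ∀ x, Integrable (fun y => f y * exp (x * y)) μ)
    (h : ∀ x, ∫ y, f y * exp (x * y) ∂μ = 0) : f =ᵐ[μ] 0 := by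
  have hf : Integrable f μ := by simpa using hint 0
  have := isFiniteMeasure_withDensity_ofReal hf.2
  have := isFiniteMeasure_withDensity_ofReal hf.neg.2
  have hpos {g : ℝ → ℝ} (hg : ∀ x, Integrable (fun y => g y * exp (x * y)) μ) (x : ℝ) :
      Integrable (fun y => max (g y) 0 * exp (x * y)) μ := by
    simpa only [max_mul_of_nonneg _ _ (exp_pos _).le, zero_mul] using (hg x).pos_part
  have hneg := hpos (g := -f) fun x => by simpa using (hint x).neg
  have hmgf : mgf id (μ.withDensity fun y => ENNReal.ofReal (f y)) =
      mgf id (μ.withDensity fun y => ENNReal.ofReal ((-f) y)) := by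
    funext x
    simp only [mgf, id, integral_withDensity_ofReal hf.aemeasurable,
      integral_withDensity_ofReal hf.neg.aemeasurable]
    rw [← sub_eq_zero, ← integral_sub (hpos hint x) (hneg x)]
    simpa only [← sub_mul, Pi.neg_apply, max_zero_sub_max_neg_zero_eq_self] using h x
  have hexp : integrableExpSet id (μ.withDensity fun y => ENNReal.ofReal (f y)) = Set.univ :=
    Set.eq_univ_of_forall fun x =>
      (integrable_withDensity_ofReal_iff hf.aemeasurable).2 (hpos hint x)
  have hmeasure : (μ.withDensity fun y => ENNReal.ofReal (f y)) =
      μ.withDensity fun y => ENNReal.ofReal ((-f) y) := by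
    simpa only [Measure.map_id] using map_eq_map_of_mgf_eq (by simp [hexp]) hmgf
  refine hf.ae_eq_of_withDensityᵥ_eq (integrable_zero _ _ _) ?_
  rw [withDensityᵥ_zero, withDensityᵥ_eq_withDensity_pos_part_sub_withDensity_neg_part hf,
    sub_eq_zero]
  exact Measure.toSignedMeasure_congr hmeasure

end ExponentialUniqueness

section CameronMartin

theorem inner_toLp_toLp {α 𝕜 E : Type*} [MeasurableSpace α] {μ : Measure α} [RCLike 𝕜]
    [NormedAddCommGroup E] [InnerProductSpace 𝕜 E] {f g : α → E} (hf : MemLp f 2 μ)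
    (hg : MemLp g 2 μ) :
    inner 𝕜 (hf.toLp f) (hg.toLp g) = ∫ y, inner 𝕜 (f y) (g y) ∂μ := by
  rw [L2.inner_def]
  refine integral_congr_ae ?_
  filter_upwards [hf.coeFn_toLp, hg.coeFn_toLp] with y hfy hgy
  rw [hfy, hgy]

/-- The density at `y` of the Gaussian law of mean `m + x` and variance `t` with respect to the one
of mean `m` and variance `t`: the feature map of the Hilbert-space argument. The shift `x` is
measured from `m`; the value is the junk constant `1` at `t = 0`. -/
noncomputable def cameronMartinDensity (m : ℝ) (t : NNReal) (x y : ℝ) : ℝ :=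
  exp (x * (y - m) / t - x ^ 2 / (2 * t))

variable {m : ℝ} {t : NNReal}

theorem cameronMartinDensity_eq_exp_mul_exp (m : ℝ) (t : NNReal) (x : ℝ) :
    cameronMartinDensity m t x =
      fun y => exp (-(x * m / t + x ^ 2 / (2 * t))) * exp (x / t * y) := by
  funext y
  rw [cameronMartinDensity, ← exp_add]
  ring_nf

theorem gaussianPDFReal_mul_cameronMartinDensity (ht : t ≠ 0) (x y : ℝ) :
    gaussianPDFReal m t y * cameronMartinDensity m t x y = gaussianPDFReal (m + x) t y := by
  rw [gaussianPDFReal, gaussianPDFReal, cameronMartinDensity, mul_assoc, ← exp_add]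
  congr 2
  field_simp
  ring

theorem integral_mul_cameronMartinDensity (ht : t ≠ 0) (φ : ℝ → ℝ) (x : ℝ) :
    ∫ y, φ y * cameronMartinDensity m t x y ∂(gaussianReal m t) =
      ∫ y, φ y ∂(gaussianReal (m + x) t) := by
  simp only [integral_gaussianReal_eq_integral_smul ht, smul_eq_mul,
    ← gaussianPDFReal_mul_cameronMartinDensity ht, mul_assoc, mul_comm (φ _)]

theorem integral_cameronMartinDensity_gaussianReal_add (ht : t ≠ 0) (x z : ℝ) :
    ∫ y, cameronMartinDensity m t z y ∂(gaussianReal (m + x) t) = exp (x * z / t) := by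
  have hmgf := congrFun (mgf_id_gaussianReal (μ := m + x) (v := t)) (z / t)
  simp only [mgf, id] at hmgf
  rw [cameronMartinDensity_eq_exp_mul_exp, integral_const_mul, hmgf, ← exp_add]
  congr 1
  field_simp
  ring

theorem memLp_exp_mul_gaussianReal (m : ℝ) (t : NNReal) (x : ℝ) {p : ENNReal} (hp : p ≠ ⊤) :
    MemLp (fun y => exp (x * y)) p (gaussianReal m t) := by
  have hmeas : AEStronglyMeasurable (fun y => exp (x * y)) (gaussianReal m t) := by fun_prop
  obtain rfl | hp0 := eq_or_ne p 0
  · exact memLp_zero_iff_aestronglyMeasurable.2 hmeas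
  rw [← integrable_norm_rpow_iff hmeas hp0 hp]
  simpa only [norm_eq_abs, abs_exp, ← exp_mul, mul_right_comm] using
    integrable_exp_mul_gaussianReal (x * p.toReal)

theorem memLp_cameronMartinDensity (m : ℝ) (t : NNReal) (x : ℝ) {p : ENNReal} (hp : p ≠ ⊤) :
    MemLp (cameronMartinDensity m t x) p (gaussianReal m t) := by
  rw [cameronMartinDensity_eq_exp_mul_exp]
  exact (memLp_exp_mul_gaussianReal m t (x / t) hp).const_mul _

/-- The Cameron–Martin density as a vector of `L²(N(m, t))`, where these vectors form the feature
map of the Gram kernel `exp (x z / t)`. -/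
noncomputable def cameronMartinLp (m : ℝ) (t : NNReal) (x : ℝ) : Lp ℝ 2 (gaussianReal m t) :=
  (memLp_cameronMartinDensity m t x ENNReal.ofNat_ne_top).toLp

theorem inner_toLp_cameronMartinLp (ht : t ≠ 0) {φ : ℝ → ℝ} (hφ : MemLp φ 2 (gaussianReal m t))
    (x : ℝ) :
    inner ℝ hφ.toLp (cameronMartinLp m t x) = ∫ y, φ y ∂(gaussianReal (m + x) t) := by
  rw [cameronMartinLp, inner_toLp_toLp, ← integral_mul_cameronMartinDensity ht]
  simp only [RCLike.inner_apply, conj_trivial, mul_comm]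

theorem inner_cameronMartinLp (ht : t ≠ 0) (x z : ℝ) :
    inner ℝ (cameronMartinLp m t x) (cameronMartinLp m t z) = exp (x * z / t) := by
  rw [cameronMartinLp, inner_toLp_cameronMartinLp ht,
    integral_cameronMartinDensity_gaussianReal_add ht, mul_comm]

theorem dense_span_cameronMartinLp (ht : t ≠ 0) :
    Dense (Submodule.span ℝ (Set.range (cameronMartinLp m t)) :
      Set (Lp ℝ 2 (gaussianReal m t))) := by
  rw [Submodule.dense_iff_topologicalClosure_eq_top, Submodule.topologicalClosure_eq_top_iff,
    Submodule.eq_bot_iff]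
  intro f hf
  have hint (x : ℝ) : Integrable (fun y => f y * exp (x * y)) (gaussianReal m t) :=
    (Lp.memLp f).integrable_mul
      (memLp_exp_mul_gaussianReal (p := 2) m t x ENNReal.ofNat_ne_top)
  refine Lp.eq_zero_iff_ae_eq_zero.2 (ae_eq_zero_of_integral_mul_exp_eq_zero hint fun x => ?_)
  have horth : inner ℝ f (cameronMartinLp m t (t * x)) = 0 := by
    rw [real_inner_comm]
    exact hf _ (Submodule.subset_span ⟨t * x, rfl⟩)
  rw [← Lp.toLp_coeFn f (Lp.memLp f), inner_toLp_cameronMartinLp ht,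
    ← integral_mul_cameronMartinDensity ht, cameronMartinDensity_eq_exp_mul_exp] at horth
  simpa only [mul_left_comm (f _), integral_const_mul, mul_eq_zero, (exp_pos _).ne', false_or,
    mul_div_cancel_left₀ x (NNReal.coe_ne_zero.2 ht)] using horth

end CameronMartin

theorem heatP_eq_integral_gaussianReal (φ : ℝ → ℝ) {t : NNReal} (ht : t ≠ 0) (x : ℝ) :
    heatP t φ x = ∫ y, φ y ∂(gaussianReal x t) := by
  rw [integral_gaussianReal_eq_integral_smul ht, heatP]
  congr 1 with y
  rw [gaussianPDFReal, smul_eq_mul, mul_comm, Real.rpow_neg (by positivity), ← Real.sqrt_eq_rpow,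
    ← neg_sub y x, neg_sq]

theorem stmt11_general {m : ℝ} {t : NNReal} (ht : 0 < t) {φ : ℝ → ℝ}
    (hφ : MemLp φ 2 (gaussianReal m t)) :
    HasSum (fun n : ℕ => (t : ℝ) ^ n / n.factorial * iteratedDeriv n (heatP t φ) m ^ 2)
      (∫ x, φ x ^ 2 ∂(gaussianReal m t)) := by
  have hgram (x z : ℝ) : HasSum (fun n : ℕ => ((t : ℝ) ^ n * n.factorial)⁻¹ * inner ℝ x z ^ n)
      (inner ℝ (cameronMartinLp m t x) (cameronMartinLp m t z)) := by
    rw [inner_cameronMartinLp ht.ne', exp_eq_exp_ℝ]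
    refine (NormedSpace.expSeries_div_hasSum_exp (x * z / t)).congr_fun fun n => ?_
    rw [RCLike.inner_apply, conj_trivial, mul_comm z, div_pow]
    field_simp
  have hheat (n : ℕ) : iteratedDeriv n (heatP t φ) m =
      iteratedDeriv n (fun x => inner ℝ hφ.toLp (cameronMartinLp m t x)) 0 := by
    simp only [inner_toLp_cameronMartinLp ht.ne', ← heatP_eq_integral_gaussianReal φ ht.ne',
      iteratedDeriv_comp_const_add, add_zero]
  have hnorm : ‖hφ.toLp‖ ^ 2 = ∫ x, φ x ^ 2 ∂(gaussianReal m t) := by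
    simp only [← real_inner_self_eq_norm_sq, inner_toLp_toLp]
    simp only [real_inner_self_eq_norm_sq, norm_eq_abs, sq_abs]
  rw [← hnorm]
  have hsum := hasSum_norm_sq_iteratedDeriv_inner (a := fun n => ((t : ℝ) ^ n * n.factorial)⁻¹)
    (fun n => by positivity) (dense_span_cameronMartinLp ht.ne') hgram hφ.toLp
  refine hsum.congr_fun fun n => ?_
  rw [hheat, norm_eq_abs, sq_abs]
  field_simp

theorem stmt11 (φ : ℝ → ℝ) (hφm : Measurable φ) (M : ℝ) (hφb : ∀ x, |φ x| ≤ M)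
    (t : NNReal) (ht : 0 < t) :
    ∫ x, (φ x) ^ 2 ∂(gaussianReal 0 t)
      = ∑' n : ℕ, (t : ℝ) ^ n / (Nat.factorial n)
          * (iteratedDeriv n (heatP t φ) 0) ^ 2 :=
  (stmt11_general ht (MemLp.of_bound hφm.aestronglyMeasurable M (.of_forall hφb))).tsum_eq.symm
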